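/- Let G be a finite group of order 2^n (n ≥ 3) with nilpotency class n − 2 (i.e., G is a 2-group of coclass 2). Then the automorphism group Aut(G) fails to be a 2-group if and only if G is isomorphic to one of the following three groups: (1) the elementary abelian group C2 × C2 × C2; (2) Q8 × C2, the direct product of the quaternion group of order 8 with the cyclic group of order 2; (3) the group P of order 16 with presentation ⟨a, b, c | a⁴ = b² = c² = 1, b^a = b, c^a = c, b^c = a²b⟩ (where x^y denotes y⁻¹xy). -/

import Mathlib

/-- Generators for the group `P = ⟨a, b, c ∣ a⁴ = b² = c² = 1, bᵃ = b, cᵃ = c, bᶜ = a²b⟩`. -/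
inductive PGen : Type
  | a | b | c

namespace PGen

def fa : FreeGroup PGen := FreeGroup.of PGen.a
def fb : FreeGroup PGen := FreeGroup.of PGen.b
def fc : FreeGroup PGen := FreeGroup.of PGen.c

/-- Relators of `P`: `a⁴`, `b²`, `c²`, `(a⁻¹ba)b⁻¹`, `(a⁻¹ca)c⁻¹`, `(c⁻¹bc)(a²b)⁻¹`. -/
def Prels : Set (FreeGroup PGen) :=
  {fa ^ 4, fb ^ 2, fc ^ 2,
   fa⁻¹ * fb * fa * fb⁻¹,
   fa⁻¹ * fc * fa * fc⁻¹,
   fc⁻¹ * fb * fc * (fa ^ 2 * fb)⁻¹}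

end PGen

/-- The group `P = ⟨a, b, c ∣ a⁴ = b² = c² = 1, bᵃ = b, cᵃ = c, bᶜ = a²b⟩`
(of order `16` and coclass `2`). -/
abbrev PGroup16 : Type := PresentedGroup PGen.Prels

/-!
If `MulAut G` is not a `2`-group, then `G` has an automorphism `φ ≠ 1` of odd prime order `p`.
Counting fixed points modulo `p` shows that a proper inclusion of `φ`-invariant subgroups containing
the fixed subgroup has index at least `4`, and that `φ` acts nontrivially on `G ⧸ G'`, hence on
every `G ⧸ N` with `N ≤ G'`. As `G` has coclass `2`, `G ⧸ G'` has order at most `8`, so it is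
elementary abelian and `φ` fixes at most two of its elements. This settles the order `8`.

Otherwise `K = G ⧸ γ₃(G)` has order at most `16`, class `2` and centre of index `4`, the centre maps
onto the fixed subgroup of `K ⧸ K'`, and `p = 3`. An element `x` outside the centre whose norm
`x * φ x * φ (φ x)` lies in `K'`, together with `y = φ x` and a central `z`, generates `K` and
satisfies `x ^ 2 = y ^ 2 = ⁅x, y⁆` and `z ^ 2 ∈ {1, ⁅x, y⁆}`. These relations on `K` force
`γ₃(G) = γ₄(G)`, so `G` has class `2` and `G ≃ K` has order `16`. The two possible values of `z ^ 2`
give `Q₈ × C₂` and the central product `Q₈ ∘ C₄`, which is `P` with `x = ab`, `y = ac`, `z = a`.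

Conversely `C₂ × C₂ × C₂` has a cyclic permutation of its factors, and on the other two groups
`x ↦ y ↦ x * y`, `z ↦ z` is an automorphism of order `3`.
-/

open Subgroup Function
open scoped commutatorElement

section FixedPoints

theorem card_modEq_card_inter_fixedPoints {α : Type*} {f : α → α} {p : ℕ} [Fact p.Prime]
    (hf : f^[p] = id) {s : Set α} [Finite s] (hs : Set.MapsTo f s s) :
    Nat.card s ≡ Nat.card ↥(s ∩ fixedPoints f) [MOD p] := by
  classical
  have := Fintype.ofFinite s
  let g : Function.End s := hs.restrict
  have hg : g ^ p ^ 1 = 1 := by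
    have hiter : g ^ p = (hs.restrict)^[p] :=
      hom_coe_pow (fun h : Function.End s ↦ (h : s → s)) rfl (fun _ _ ↦ rfl) g p
    rw [pow_one, hiter]
    exact funext fun x ↦ Subtype.ext
      ((Semiconj.iterate_right (fun _ ↦ rfl : Semiconj Subtype.val hs.restrict f) p x).trans
        (congrFun hf x.1))
  have e : fixedPoints g ≃ ↥(s ∩ fixedPoints f) :=
    { toFun := fun x ↦ ⟨x.1, x.1.2, congrArg Subtype.val x.2⟩
      invFun := fun x ↦ ⟨⟨x.1, x.2.1⟩, Subtype.ext x.2.2⟩ }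
  rw [← Nat.card_congr e, Nat.card_eq_fintype_card, Nat.card_eq_fintype_card]
  exact Equiv.Perm.card_fixedPoints_modEq hg

variable {G : Type*} [Group G] {φ : G →* G} {p : ℕ}

/-- The subgroup of elements fixed by an endomorphism. -/
def fixedSubgroup (φ : G →* G) : Subgroup G := φ.eqLocus (MonoidHom.id G)

theorem mem_fixedSubgroup {g : G} : g ∈ fixedSubgroup φ ↔ φ g = g := Iff.rfl

theorem fixedSubgroup_eq_top : fixedSubgroup φ = ⊤ ↔ φ = MonoidHom.id G :=
  ⟨fun h ↦ MonoidHom.ext fun g ↦ mem_fixedSubgroup.1 (h ▸ mem_top g), fun h ↦ by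
    subst h; exact MonoidHom.eqLocus_same _⟩

theorem card_modEq_card_fixedSubgroup [Fact p.Prime] (hφ : φ^[p] = id) {H : Subgroup G} [Finite H]
    (hH : H ≤ H.comap φ) (hfix : fixedSubgroup φ ≤ H) :
    Nat.card H ≡ Nat.card (fixedSubgroup φ) [MOD p] := by
  have h : (H : Set G) ∩ fixedPoints φ = fixedSubgroup φ :=
    Set.inter_eq_right.2 hfix
  exact (card_modEq_card_inter_fixedPoints hφ (s := (H : Set G)) hH).trans (by rw [h]; rfl)

theorem mem_fixedSubgroup_sup_of_inv_mul_mem [Fact p.Prime] (hφ : φ^[p] = id) {N : Subgroup G}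
    [Finite N] (hN : N ≤ N.comap φ) (hcard : ¬ p ∣ Nat.card N) {g : G} (hg : g⁻¹ * φ g ∈ N) :
    g ∈ fixedSubgroup φ ⊔ N := by
  let s : Set G := {x | g⁻¹ * x ∈ N}
  have hs : Set.MapsTo φ s s := fun x hx ↦ by
    have h := N.mul_mem hg (hN hx)
    simpa [s, mul_assoc] using h
  have e : s ≃ N := (Equiv.mulLeft g⁻¹).subtypeEquiv fun _ ↦ Iff.rfl
  have : Finite s := Finite.of_equiv N e.symm
  have hmod := card_modEq_card_inter_fixedPoints hφ hs
  obtain ⟨⟨x, hxs, hx⟩⟩ : Nonempty ↥(s ∩ fixedPoints φ) := by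
    by_contra hempty
    rw [not_nonempty_iff] at hempty
    rw [Nat.card_congr e, Nat.card_of_isEmpty (α := ↥(s ∩ _))] at hmod
    exact hcard ((Nat.modEq_zero_iff_dvd).1 hmod)
  have h : g = x * (g⁻¹ * x)⁻¹ := by group
  rw [h]
  exact mul_mem_sup hx (N.inv_mem hxs)

/-- Both orders are congruent to that of the fixed subgroup modulo `p`, so `p` divides
`(|L : H| - 1) |H|`, which excludes `|L : H| = 2`. -/
theorem four_mul_card_le_of_lt [Finite G] (hG : IsPGroup 2 G) [Fact p.Prime] (hp : p ≠ 2)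
    (hφ : φ^[p] = id) {H L : Subgroup G} (hH : H ≤ H.comap φ) (hL : L ≤ L.comap φ)
    (hfix : fixedSubgroup φ ≤ H) (hlt : H < L) : 4 * Nat.card H ≤ Nat.card L := by
  obtain ⟨a, ha⟩ := (hG.to_subgroup H).exists_card_eq
  obtain ⟨b, hb⟩ := (hG.to_subgroup L).exists_card_eq
  have hcard : Nat.card H < Nat.card L :=
    lt_of_le_of_ne (Nat.le_of_dvd Nat.card_pos (card_dvd_of_le hlt.le))
      fun h ↦ hlt.ne (eq_of_le_of_card_ge hlt.le h.ge)
  have hmod : 2 ^ a ≡ 2 ^ b [MOD p] := by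
    rw [← ha, ← hb]
    exact (card_modEq_card_fixedSubgroup hφ hH hfix).trans
      (card_modEq_card_fixedSubgroup hφ hL (hfix.trans hlt.le)).symm
  rw [ha, hb] at hcard ⊢
  obtain ⟨k, rfl⟩ := Nat.exists_eq_add_of_lt ((Nat.pow_lt_pow_iff_right one_lt_two).1 hcard)
  cases k with
  | zero =>
    have hdvd : p ∣ 2 ^ a := by
      have h := (Nat.modEq_iff_dvd' hcard.le).1 hmod
      rwa [show 2 ^ (a + 0 + 1) - 2 ^ a = 2 ^ a by rw [add_zero, pow_succ]; omega] at h
    have := (Nat.prime_dvd_prime_iff_eq Fact.out Nat.prime_two).1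
      (Nat.Prime.dvd_of_dvd_pow Fact.out hdvd)
    contradiction
  | succ k =>
    calc 4 * 2 ^ a = 2 ^ (a + 2) := by ring
      _ ≤ 2 ^ (a + (k + 1) + 1) := Nat.pow_le_pow_right two_pos (by omega)

theorem eq_fixedSubgroup_or_eq_top [Finite G] (hG : IsPGroup 2 G) (hcard : Nat.card G < 16)
    [Fact p.Prime] (hp : p ≠ 2) (hφ : φ^[p] = id) {H : Subgroup G} (hH : H ≤ H.comap φ)
    (hfix : fixedSubgroup φ ≤ H) : H = fixedSubgroup φ ∨ H = ⊤ := by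
  by_contra! h
  have hinv : fixedSubgroup φ ≤ (fixedSubgroup φ).comap φ := fun g hg ↦ congrArg φ hg
  have h₁ := four_mul_card_le_of_lt hG hp hφ hinv hH le_rfl (lt_of_le_of_ne hfix h.1.symm)
  have h₂ := four_mul_card_le_of_lt hG hp hφ hH le_top hfix (lt_top_iff_ne_top.2 h.2)
  have hpos : 0 < Nat.card (fixedSubgroup φ) := Nat.card_pos
  rw [card_top] at h₂
  omega

end FixedPoints

section Nilpotent

variable {G K : Type*} [Group G] [Group K] {φ : G →* G} {p : ℕ}

theorem eq_top_of_sup_commutator_eq_top [Finite G] [Group.IsNilpotent G] {S : Subgroup G}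
    (hS : S ⊔ commutator G = ⊤) : S = ⊤ := by
  obtain rfl | ⟨M, hM, hSM⟩ := eq_top_or_exists_le_coatom S
  · rfl
  have hcoatom : ∀ H : Subgroup G, IsCoatom H → H.Normal :=
    (Group.isNilpotent_of_finite_tfae.out 0 2).1 ‹_›
  have hnormal := hcoatom M hM
  obtain ⟨g, -, hg⟩ := SetLike.exists_of_lt hM.lt_top
  have hsup : M ⊔ zpowers g = ⊤ :=
    hM.2 _ (left_lt_sup.2 fun h ↦ hg (h (mem_zpowers g)))
  have hcomm : commutator G ≤ M := hnormal.commutator_le_of_self_sup_commutative_eq_top hsup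
    inferInstance
  exact absurd (top_le_iff.1 (hS ▸ sup_le hSM hcomm)) hM.1

theorem commutator_le_comap_commutator (φ : G →* G) :
    commutator G ≤ (commutator G).comap φ := by
  rw [← map_le_iff_le_comap, map_commutator_eq]
  exact commutator_mono le_top le_top

theorem exists_inv_mul_map_notMem_commutator [Finite G] [Group.IsNilpotent G] [Fact p.Prime]
    (hcard : ¬ p ∣ Nat.card G) (hφ : φ^[p] = id) (hne : φ ≠ MonoidHom.id G) :
    ∃ g, g⁻¹ * φ g ∉ commutator G := by
  by_contra! h
  have hdvd : ¬ p ∣ Nat.card (commutator G) := fun hp ↦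
    hcard (hp.trans (card_subgroup_dvd_card _))
  refine hne (fixedSubgroup_eq_top.1 (eq_top_of_sup_commutator_eq_top (top_le_iff.1 fun g _ ↦ ?_)))
  exact mem_fixedSubgroup_sup_of_inv_mul_mem hφ (commutator_le_comap_commutator φ)
    hdvd (h g)

theorem iterate_eq_id_of_comp_eq {f : G →* K} (hf : Surjective f) {ψ : K →* K}
    (h : ψ.comp f = f.comp φ) (hφ : φ^[p] = id) : ψ^[p] = id := by
  have hsemi : Semiconj f φ ψ := fun g ↦ (DFunLike.congr_fun h g).symm
  refine hf.injective_comp_right (funext fun g ↦ ?_)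
  change ψ^[p] (f g) = f g
  rw [← (hsemi.iterate_right p).eq g, hφ, id]

theorem ne_id_of_comp_eq [Finite G] [Group.IsNilpotent G] [Fact p.Prime]
    (hcard : ¬ p ∣ Nat.card G) (hφ : φ^[p] = id) (hne : φ ≠ MonoidHom.id G) {f : G →* K}
    (hker : f.ker ≤ commutator G) {ψ : K →* K} (h : ψ.comp f = f.comp φ) :
    ψ ≠ MonoidHom.id K := by
  rintro rfl
  obtain ⟨g, hg⟩ := exists_inv_mul_map_notMem_commutator hcard hφ hne
  exact hg (hker (f.eq_iff.1 (DFunLike.congr_fun h g).symm))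

theorem not_dvd_card_of_isPGroup [Finite G] {q : ℕ} [Fact q.Prime] (hG : IsPGroup q G)
    (hp : p.Prime) (hpq : p ≠ q) : ¬ p ∣ Nat.card G := by
  obtain ⟨k, hk⟩ := hG.exists_card_eq
  rw [hk]
  exact fun h ↦ hpq ((Nat.prime_dvd_prime_iff_eq hp Fact.out).1 (hp.dvd_of_dvd_pow h))

end Nilpotent

section Abelian

variable {A : Type*} [CommGroup A] [Finite A] {φ : A →* A} {p : ℕ} [Fact p.Prime]

theorem exists_notMem_sq_mem {G : Type*} [Group G] [Finite G] (hG : IsPGroup 2 G) {N : Subgroup G}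
    [N.Normal] (hN : N ≠ ⊤) : ∃ g, g ∉ N ∧ g ^ 2 ∈ N := by
  have : Nontrivial (G ⧸ N) := QuotientGroup.nontrivial_iff.2 hN
  obtain ⟨k, hk, hcard⟩ := (hG.to_quotient N).nontrivial_iff_card.1 this
  obtain ⟨x, hx⟩ := exists_prime_orderOf_dvd_card' (G := G ⧸ N) 2
    (hcard ▸ dvd_pow_self 2 hk.ne')
  obtain ⟨g, rfl⟩ := QuotientGroup.mk_surjective x
  refine ⟨g, fun h ↦ ?_, (QuotientGroup.eq_one_iff _).1 ?_⟩
  · rw [(QuotientGroup.eq_one_iff g).2 h, orderOf_one] at hx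
    exact absurd hx (by norm_num)
  · exact (orderOf_dvd_iff_pow_eq_one (x := (g : G ⧸ N))).1 hx.dvd

theorem dvd_two_of_pos_of_le_two {n : ℕ} (hpos : 0 < n) (hle : n ≤ 2) : n ∣ 2 := by
  interval_cases n <;> norm_num

theorem sq_eq_one_of_card_le_two {G : Type*} [Group G] {H : Subgroup G} [Finite H]
    (hH : Nat.card H ≤ 2) {h : G} (hh : h ∈ H) : h ^ 2 = 1 :=
  orderOf_dvd_iff_pow_eq_one.1
    ((H.orderOf_dvd_natCard hh).trans (dvd_two_of_pos_of_le_two Nat.card_pos hH))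

theorem four_mul_card_fixedSubgroup_le {G : Type*} [Group G] [Finite G] {φ : G →* G}
    (hG : IsPGroup 2 G) (hp : p ≠ 2) (hφ : φ^[p] = id) (hne : φ ≠ MonoidHom.id G) :
    4 * Nat.card (fixedSubgroup φ) ≤ Nat.card G := by
  rw [← card_top (G := G)]
  exact four_mul_card_le_of_lt hG hp hφ (fun g hg ↦ congrArg φ hg) le_top le_rfl
    (lt_top_iff_ne_top.2 (mt fixedSubgroup_eq_top.1 hne))

theorem sq_mem_fixedSubgroup (hA : IsPGroup 2 A) (hcard : Nat.card A < 16) (hp : p ≠ 2)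
    (hφ : φ^[p] = id) (hne : φ ≠ MonoidHom.id A) (a : A) : a ^ 2 ∈ fixedSubgroup φ := by
  let H : Subgroup A := (fixedSubgroup φ).comap (powMonoidHom 2)
  have hH : H ≤ H.comap φ := fun b hb ↦ by
    have hb2 : φ (b ^ 2) = b ^ 2 := hb
    change φ (φ b ^ 2) = φ b ^ 2
    rw [← map_pow, hb2, hb2]
  have hfix : fixedSubgroup φ ≤ H := fun b hb ↦ pow_mem hb 2
  obtain h | h := eq_fixedSubgroup_or_eq_top hA hcard hp hφ hH hfix
  · obtain ⟨b, hb, hb2⟩ := exists_notMem_sq_mem hA (mt fixedSubgroup_eq_top.1 hne)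
    exact absurd (h ▸ hb2 : b ∈ fixedSubgroup φ) hb
  · exact (h ▸ mem_top a : a ∈ H)

theorem sq_eq_one_of_card_le_eight (hA : IsPGroup 2 A) (hcard : Nat.card A ≤ 8) (hp : p ≠ 2)
    (hφ : φ^[p] = id) (hne : φ ≠ MonoidHom.id A) (a : A) : a ^ 2 = 1 := by
  let T : Subgroup A := (powMonoidHom 2 : A →* A).ker
  have hFix := four_mul_card_fixedSubgroup_le hA hp hφ hne
  have hT : T ≤ T.comap φ := fun b hb ↦ by
    have hb2 : b ^ 2 = 1 := hb
    change φ b ^ 2 = 1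
    rw [← map_pow, hb2, map_one]
  have hFixT : fixedSubgroup φ ≤ T := fun b hb ↦ sq_eq_one_of_card_le_two (by omega) hb
  obtain h | h := eq_fixedSubgroup_or_eq_top hA (by omega) hp hφ hT hFixT
  · have hrange : (powMonoidHom 2 : A →* A).range ≤ fixedSubgroup φ := by
      rintro _ ⟨b, rfl⟩
      exact sq_mem_fixedSubgroup hA (by omega) hp hφ hne b
    have hmul : Nat.card T * Nat.card (powMonoidHom 2 : A →* A).range = Nat.card A := by
      rw [← index_ker]; exact card_mul_index _
    have hle := Nat.mul_le_mul_left (Nat.card T) (card_le_of_le hrange)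
    have hpos : 0 < Nat.card (fixedSubgroup φ) := Nat.card_pos
    rw [h] at hmul hle
    nlinarith
  · exact (h ▸ mem_top a : a ∈ T)

theorem sq_mem_commutator {K : Type*} [Group K] [Finite K] (hK : IsPGroup 2 K)
    (hcard : Nat.card (Abelianization K) ≤ 8) (hp : p ≠ 2) {φ : K →* K} (hφ : φ^[p] = id)
    (hne : φ ≠ MonoidHom.id K) (g : K) : g ^ 2 ∈ commutator K := by
  have := hK.isNilpotent
  have hcomp : (Abelianization.map φ).comp Abelianization.of = Abelianization.of.comp φ := rfl
  have hof : Surjective (Abelianization.of (G := K)) := QuotientGroup.mk'_surjective _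
  rw [← Abelianization.ker_of K, MonoidHom.mem_ker, map_pow]
  exact sq_eq_one_of_card_le_eight (hK.of_surjective Abelianization.of hof)
    hcard hp (iterate_eq_id_of_comp_eq hof hcomp hφ)
    (ne_id_of_comp_eq (not_dvd_card_of_isPGroup hK Fact.out hp) hφ hne
      (Abelianization.ker_of K).le hcomp) _

theorem eq_three_of_index_fixedSubgroup_le_four (hA : IsPGroup 2 A) (hcard : Nat.card A ≤ 8)
    (hp : p ≠ 2) (hφ : φ^[p] = id) (hne : φ ≠ MonoidHom.id A)
    (hindex : (fixedSubgroup φ).index ≤ 4) : p = 3 := by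
  have hFix := four_mul_card_fixedSubgroup_le hA hp hφ hne
  have hpos : 0 < Nat.card (fixedSubgroup φ) := Nat.card_pos
  have hmul := card_mul_index (fixedSubgroup φ)
  have hmod := card_modEq_card_fixedSubgroup hφ (H := ⊤) le_top le_top
  have hAcard : Nat.card A = Nat.card (fixedSubgroup φ) * 4 := by nlinarith
  rw [card_top, hAcard] at hmod
  have hdvd : p ∣ Nat.card (fixedSubgroup φ) * 3 := by
    have h := (Nat.modEq_iff_dvd' (by omega)).1 hmod.symm
    rwa [show Nat.card (fixedSubgroup φ) * 4 - Nat.card (fixedSubgroup φ) =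
      Nat.card (fixedSubgroup φ) * 3 by omega] at h
  obtain h | h := (Nat.Prime.dvd_mul Fact.out).1 hdvd
  · exact absurd (h.trans (card_subgroup_dvd_card _)) (not_dvd_card_of_isPGroup hA Fact.out hp)
  · exact (Nat.prime_dvd_prime_iff_eq Fact.out Nat.prime_three).1 h

theorem eq_fixedSubgroup_of_index_le_four (hA : IsPGroup 2 A) (hcard : Nat.card A ≤ 8)
    (hp : p ≠ 2) (hφ : φ^[p] = id) (hne : φ ≠ MonoidHom.id A) {H : Subgroup A}
    (hH : H ≤ H.comap φ) (htwo : 2 < H.index) (hfour : H.index ≤ 4) : H = fixedSubgroup φ := by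
  have hFix := four_mul_card_fixedSubgroup_le hA hp hφ hne
  have hpos : 0 < Nat.card (fixedSubgroup φ) := Nat.card_pos
  have hmul := card_mul_index (fixedSubgroup φ)
  have hHmul := card_mul_index H
  have hsup : H ⊔ fixedSubgroup φ ≤ (H ⊔ fixedSubgroup φ).comap φ :=
    sup_le (hH.trans (comap_mono le_sup_left))
      fun a ha ↦ mem_sup_right (mem_fixedSubgroup.2 (congrArg φ ha))
  obtain h | h := eq_fixedSubgroup_or_eq_top hA (by omega) hp hφ hsup le_sup_right
  · exact eq_of_le_of_card_ge (sup_eq_right.1 h) (by nlinarith)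
  · have hdvd : H.index ∣ Nat.card (fixedSubgroup φ) := by
      rw [← relIndex_top_right, ← h, relIndex_sup_left]
      exact relIndex_dvd_card _ _
    have := Nat.le_of_dvd hpos hdvd
    omega

/-- Multiplying an element `u` by its norm `u * φ u * φ (φ u)`, which is fixed, raises the norm to
the fourth power. -/
theorem exists_closure_sup_fixedSubgroup_eq_top (hA : IsPGroup 2 A) (hcard : Nat.card A ≤ 8)
    (hφ : φ^[3] = id) (hne : φ ≠ MonoidHom.id A) :
    ∃ x : A, x * φ x * φ (φ x) = 1 ∧ closure {x, φ x} ⊔ fixedSubgroup φ = ⊤ := by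
  have hφ3 : ∀ a, φ (φ (φ a)) = a := congrFun hφ
  have hsq := sq_eq_one_of_card_le_eight hA hcard (by norm_num) hφ hne
  obtain ⟨u, hu⟩ : ∃ u, u ∉ fixedSubgroup φ := by
    by_contra! h
    exact hne (fixedSubgroup_eq_top.1 (top_le_iff.1 fun a _ ↦ h a))
  let N := u * φ u * φ (φ u)
  have hN : φ N = N := by
    simp only [N, map_mul, hφ3]
    rw [mul_comm, mul_assoc]
  have hnorm : u * N * φ (u * N) * φ (φ (u * N)) = 1 :=
    calc u * N * φ (u * N) * φ (φ (u * N)) = N * (N * N * N) := by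
          rw [map_mul φ u, hN, map_mul φ (φ u), hN, mul_mul_mul_comm u, mul_mul_mul_comm (u * φ u)]
      _ = (N ^ 2) ^ 2 := by simp only [pow_two, mul_assoc]
      _ = 1 := hsq _
  refine ⟨u * N, hnorm, ?_⟩
  set x := u * N
  have hxmem : x ∈ closure {x, φ x} := subset_closure (by simp)
  have hφxmem : φ x ∈ closure {x, φ x} := subset_closure (by simp)
  have hinv : closure {x, φ x} ⊔ fixedSubgroup φ ≤
      (closure {x, φ x} ⊔ fixedSubgroup φ).comap φ := by
    refine sup_le ((closure_le _).2 ?_) fun a (ha : φ a = a) ↦ ?_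
    · rintro a (rfl | rfl)
      · exact mem_sup_left hφxmem
      · have h : φ (φ x) = (x * φ x)⁻¹ := (eq_inv_of_mul_eq_one_right hnorm)
        exact mem_sup_left (h ▸ inv_mem (mul_mem hxmem hφxmem))
    · exact mem_sup_right (mem_fixedSubgroup.2 (congrArg φ ha))
  refine (eq_fixedSubgroup_or_eq_top hA (by omega) (by norm_num) hφ hinv le_sup_right).resolve_left
    fun h ↦ hu ?_
  have hx : x ∈ fixedSubgroup φ := h ▸ mem_sup_left hxmem
  simpa [x] using mul_mem hx (inv_mem (mem_fixedSubgroup.2 hN))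

end Abelian

section Commutators

variable {G : Type*} [Group G]

theorem normal_of_le_center {N : Subgroup G} (hN : N ≤ center G) : N.Normal :=
  ⟨fun n hn g ↦ by rwa [mem_center_iff.1 (hN hn) g, mul_inv_cancel_right]⟩

theorem mem_center_of_closure_eq_top {X : Set G} (hX : closure X = ⊤) {g : G}
    (hg : ∀ x ∈ X, Commute x g) : g ∈ center G := by
  have hle : closure X ≤ centralizer {g} :=
    (closure_le _).2 fun x hx ↦ mem_centralizer_singleton_iff.2 (hg x hx)
  exact mem_center_iff.2 fun x ↦ mem_centralizer_singleton_iff.1 (hle (hX ▸ mem_top x))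

theorem commutatorElement_mem_iff_commute {T : Subgroup G} [T.Normal] {a b : G} :
    ⁅a, b⁆ ∈ T ↔ Commute (QuotientGroup.mk' T a) (QuotientGroup.mk' T b) := by
  rw [← commutatorElement_eq_one_iff_commute, ← map_commutatorElement, ← MonoidHom.mem_ker,
    QuotientGroup.ker_mk']

theorem commutator_le_of_closure_eq_top {X : Set G} (hX : closure X = ⊤) {T : Subgroup G}
    [T.Normal] (hT : ∀ a ∈ X, ∀ b ∈ X, ⁅a, b⁆ ∈ T) : commutator G ≤ T := by
  have hclosure : closure (QuotientGroup.mk' T '' X) = ⊤ := by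
    rw [← MonoidHom.map_closure, hX, map_top_of_surjective _ (QuotientGroup.mk'_surjective T)]
  have hcenter : center (G ⧸ T) = ⊤ := by
    rw [eq_top_iff, ← hclosure, closure_le]
    rintro _ ⟨b, hb, rfl⟩
    refine mem_center_of_closure_eq_top hclosure ?_
    rintro _ ⟨a, ha, rfl⟩
    exact commutatorElement_mem_iff_commute.1 (hT a ha b hb)
  rw [commutator_eq_closure, closure_le]
  rintro _ ⟨a, b, rfl⟩
  exact commutatorElement_mem_iff_commute.2 (mem_center_iff.1 (hcenter ▸ mem_top _) _)

/-- The endomorphism `g ↦ ⁅a, g⁆`, defined when all commutators with `a` are central. -/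
def commutatorHom (a : G) (ha : ∀ g, ⁅a, g⁆ ∈ center G) : G →* G :=
  MonoidHom.mk' (fun g ↦ ⁅a, g⁆) fun g h ↦ by
    rw [commutatorElement_mul_right_eq_mul_conj, mul_assoc ⁅a, g⁆, mem_center_iff.1 (ha h) g,
      mul_assoc, mul_inv_cancel_right]

theorem commutatorHom_apply (a : G) (ha : ∀ g, ⁅a, g⁆ ∈ center G) (g : G) :
    commutatorHom a ha g = ⁅a, g⁆ := rfl

theorem ker_commutatorHom (a : G) (ha : ∀ g, ⁅a, g⁆ ∈ center G) :
    (commutatorHom a ha).ker = centralizer {a} := by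
  ext g
  rw [MonoidHom.mem_ker, commutatorHom_apply, commutatorElement_eq_one_iff_mul_comm,
    mem_centralizer_singleton_iff, eq_comm]

theorem commute_commutatorElement {a : G} (ha : ∀ g, ⁅a, g⁆ ∈ center G) (x y : G) :
    Commute a ⁅x, y⁆ := by
  have hcomm : Commute ⁅a, x⁆ ⁅a, y⁆ := mem_center_iff.1 (ha y) _
  rw [← commutatorElement_eq_one_iff_commute, ← commutatorHom_apply a ha, map_commutatorElement]
  exact hcomm.commutator_eq

theorem commutatorElement_mem_center (hcent : commutator G ≤ center G) (a b : G) :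
    ⁅a, b⁆ ∈ center G := hcent (commutator_mem_commutator (mem_top a) (mem_top b))

theorem pow_commutatorElement (hcent : commutator G ≤ center G) (a b : G) (n : ℕ) :
    ⁅a ^ n, b⁆ = ⁅a, b⁆ ^ n := by
  have h := map_pow (commutatorHom b (commutatorElement_mem_center hcent b)) a n
  rw [commutatorHom_apply, commutatorHom_apply] at h
  rw [← commutatorElement_inv, h, ← inv_pow, commutatorElement_inv]

theorem commutator_le_of_closure_pair_union_eq_top {x y : G} {W : Set G}
    (hgen : closure ({x, y} ∪ W) = ⊤) {T : Subgroup G} [T.Normal] (hxy : ⁅x, y⁆ ∈ T)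
    (hW : ∀ w ∈ W, ∀ g, ⁅w, g⁆ ∈ T) : commutator G ≤ T := by
  have hyx : ⁅y, x⁆ ∈ T := commutatorElement_inv x y ▸ inv_mem hxy
  refine commutator_le_of_closure_eq_top hgen ?_
  rintro a (ha | ha) b (hb | hb)
  · obtain rfl | rfl := ha <;> obtain rfl | rfl := hb
    · rw [commutatorElement_self]
      exact one_mem T
    · exact hxy
    · exact hyx
    · rw [commutatorElement_self]
      exact one_mem T
  · exact commutatorElement_inv b a ▸ inv_mem (hW b hb a)
  · exact hW a ha b
  · exact hW a ha b

theorem commutator_eq_zpowers (hcent : commutator G ≤ center G) {x y : G}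
    (hxy : closure {x, y} ⊔ center G = ⊤) : commutator G = zpowers ⁅x, y⁆ := by
  have := normal_of_le_center (zpowers_le.2 (commutatorElement_mem_center hcent x y))
  refine le_antisymm ?_ (zpowers_le.2 (commutator_mem_commutator (mem_top x) (mem_top y)))
  rw [← closure_eq (center G), ← Subgroup.closure_union] at hxy
  refine commutator_le_of_closure_pair_union_eq_top hxy (mem_zpowers _) fun w hw g ↦ ?_
  rw [commutatorElement_eq_one_iff_mul_comm.2 (mem_center_iff.1 hw g).symm]
  exact one_mem _

section Finite

variable [Finite G]

theorem two_mul_index_le_of_lt {H L : Subgroup G} (hlt : H < L) : 2 * L.index ≤ H.index := by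
  have hne : H.relIndex L ≠ 1 := fun h ↦ hlt.not_ge (relIndex_eq_one.1 h)
  have hne0 : H.relIndex L ≠ 0 := index_ne_zero_of_finite
  rw [← relIndex_mul_index hlt.le]
  exact Nat.mul_le_mul_right _ (by omega)

theorem index_centralizer_le_card_commutator (hcent : commutator G ≤ center G) (a : G) :
    (centralizer {a}).index ≤ Nat.card (commutator G) := by
  rw [← ker_commutatorHom a (commutatorElement_mem_center hcent a), index_ker]
  refine card_le_of_le ?_
  rintro _ ⟨g, rfl⟩
  exact commutator_mem_commutator (mem_top a) (mem_top g)

/-- `⟨a⟩ G'` has index at most `4` in `G`, hence at most `2` in the centralizer of `a`, and lies in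
the center of the latter. -/
theorem commute_of_mem_centralizer (hcent : commutator G ≤ center G)
    (hindex : (commutator G).index ≤ 8) {a b c : G} (ha : a ∉ center G)
    (hb : b ∈ centralizer {a}) (hc : c ∈ centralizer {a}) : Commute b c := by
  let D := zpowers a ⊔ commutator G
  have hD : ∀ g ∈ centralizer {a}, D ≤ centralizer {g} := fun g hg ↦
    sup_le
      (zpowers_le.2 (mem_centralizer_singleton_iff.2 (mem_centralizer_singleton_iff.1 hg).symm))
      (hcent.trans (center_le_centralizer _))
  have hlt : commutator G < D := right_lt_sup.2 fun h ↦ ha (hcent (h (mem_zpowers a)))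
  have hne : centralizer {a} ≠ ⊤ := fun h ↦ ha (mem_center_iff.2 fun g ↦
    mem_centralizer_singleton_iff.1 (h ▸ mem_top g))
  have hone := one_lt_index_of_ne_top hne
  have hD2 := two_mul_index_le_of_lt hlt
  by_cases hbD : b ∈ D
  · exact mem_centralizer_singleton_iff.1 (hD c hc hbD)
  · have hDa : D ≤ centralizer {a} := hD a (mem_centralizer_singleton_iff.2 rfl)
    have hle : D ⊔ zpowers b ≤ centralizer {a} := sup_le hDa (zpowers_le.2 hb)
    have hltb : D < D ⊔ zpowers b := left_lt_sup.2 fun h ↦ hbD (h (mem_zpowers b))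
    have heq : D ⊔ zpowers b = centralizer {a} := by
      by_contra h
      have := two_mul_index_le_of_lt hltb
      have := two_mul_index_le_of_lt (lt_of_le_of_ne hle h)
      omega
    have hcb : D ⊔ zpowers b ≤ centralizer {b} :=
      sup_le (hD b hb) (zpowers_le.2 (mem_centralizer_singleton_iff.2 rfl))
    exact (mem_centralizer_singleton_iff.1 (hcb (heq ▸ hc))).symm

theorem index_center_le_four (hcent : commutator G ≤ center G)
    (hcard : Nat.card (commutator G) ≤ 2) (hindex : (commutator G).index ≤ 8) :
    (center G).index ≤ 4 := by
  by_cases htop : center G = ⊤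
  · rw [htop, index_top]; norm_num
  obtain ⟨a, -, ha⟩ := SetLike.exists_of_lt (lt_top_iff_ne_top.2 htop)
  obtain ⟨c, hc⟩ : ∃ c, c ∉ centralizer {a} := by
    by_contra! h
    exact ha (mem_center_iff.2 fun g ↦ mem_centralizer_singleton_iff.1 (h g))
  have htwo : ∀ g : G, (centralizer {g}).index ≤ 2 := fun g ↦
    (index_centralizer_le_card_commutator hcent g).trans hcard
  have hle : centralizer {a} ⊓ centralizer {c} ≤ center G := by
    rintro g ⟨hga, hgc⟩
    have hsub : centralizer {a} ≤ centralizer {g} := fun b hb ↦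
      mem_centralizer_singleton_iff.2 (commute_of_mem_centralizer hcent hindex ha hb hga)
    have hcg : c ∈ centralizer {g} :=
      mem_centralizer_singleton_iff.2 (mem_centralizer_singleton_iff.1 hgc).symm
    have hlt : centralizer {a} < centralizer {g} := lt_of_le_not_ge hsub fun h ↦ hc (h hcg)
    have hg : (centralizer {g}).index = 1 := by
      have := two_mul_index_le_of_lt hlt
      have := htwo a
      have : (centralizer {g}).index ≠ 0 := index_ne_zero_of_finite
      omega
    exact mem_center_iff.2 fun b ↦
      mem_centralizer_singleton_iff.1 (index_eq_one.1 hg ▸ mem_top b)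
  calc (center G).index ≤ (centralizer {a} ⊓ centralizer {c}).index := index_antitone hle
    _ ≤ (centralizer {a}).index * (centralizer {c}).index := index_inf_le
    _ ≤ 2 * 2 := Nat.mul_le_mul (htwo a) (htwo c)

end Finite

end Commutators

section QuaternionicTriple

/-- Generators `x, y, z` of a group, with `z` central, satisfying the relations of `Q₈ × C₂`
(when `z ^ 2 = 1`) or of the central product `Q₈ ∘ C₄` (when `z ^ 2 = ⁅x, y⁆`). -/
structure IsQuaternionicTriple {G : Type*} [Group G] (x y z : G) : Prop where
  closure_eq_top : closure {x, y, z} = ⊤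
  mem_center : z ∈ center G
  sq_left : x ^ 2 = ⁅x, y⁆
  sq_right : y ^ 2 = ⁅x, y⁆
  sq_center : z ^ 2 = 1 ∨ z ^ 2 = ⁅x, y⁆

variable {G K : Type*} [Group G] [Group K]

theorem IsQuaternionicTriple.map {x y z : G} (h : IsQuaternionicTriple x y z) {f : G →* K}
    (hf : Surjective f) : IsQuaternionicTriple (f x) (f y) (f z) where
  closure_eq_top := by
    rw [← map_top_of_surjective f hf, ← h.closure_eq_top, MonoidHom.map_closure]
    simp only [Set.image_insert_eq, Set.image_singleton]
  mem_center := mem_center_iff.2 <| hf.forall.2 fun g ↦ by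
    rw [← map_mul, mem_center_iff.1 h.mem_center g, map_mul]
  sq_left := by rw [← map_pow, h.sq_left, map_commutatorElement]
  sq_right := by rw [← map_pow, h.sq_right, map_commutatorElement]
  sq_center := h.sq_center.imp (fun hz ↦ by rw [← map_pow, hz, map_one])
    fun hz ↦ by rw [← map_pow, hz, map_commutatorElement]

theorem eq_one_or_eq_of_mem_zpowers {t g : G} (ht : t ^ 2 = 1) (hg : g ∈ zpowers t) :
    g = 1 ∨ g = t := by
  obtain ⟨i, rfl⟩ := mem_zpowers_iff.1 hg
  have ht' : t ^ (2 : ℤ) = 1 := mod_cast ht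
  obtain ⟨j, rfl | rfl⟩ := Int.even_or_odd' i
  · left; rw [zpow_mul, ht', one_zpow]
  · right; rw [zpow_add, zpow_mul, ht', one_zpow, one_mul, zpow_one]

theorem sq_eq_commutatorElement {x y : G} (hy : y ^ 2 = x ^ 2) (hxy : (x * y) ^ 2 = x ^ 2) :
    x ^ 2 = ⁅x, y⁆ := by
  have hyxy : y * x * y = x := by
    rw [pow_two, pow_two, mul_assoc, mul_right_inj, ← mul_assoc] at hxy
    exact hxy
  have hconj : y * x * y⁻¹ = x⁻¹ :=
    calc y * x * y⁻¹ = y * x * y * (y ^ 2)⁻¹ := by group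
      _ = x⁻¹ := by rw [hyxy, hy]; group
  calc x ^ 2 = x * (x⁻¹)⁻¹ := by rw [inv_inv, pow_two]
    _ = ⁅x, y⁆ := by rw [← hconj, commutatorElement_def]; group

theorem commutator_eq_bot_of_index_center_dvd_prime {q : ℕ} [Fact q.Prime]
    (h : (center K).index ∣ q) : commutator K = ⊥ := by
  have : IsCyclic (K ⧸ center K) := isCyclic_of_card_dvd_prime h
  exact (commutator_eq_bot_iff K).2 (MonoidHom.isMulCommutative_of_isCyclic_of_ker_le_center
    (QuotientGroup.mk' (center K)) (QuotientGroup.ker_mk' _).le)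

theorem center_le_comap_center {ψ : K →* K} (hψ : Surjective ψ) :
    center K ≤ (center K).comap ψ := fun z hz ↦
  mem_center_iff.2 <| hψ.forall.2 fun g ↦ by rw [← map_mul, mem_center_iff.1 hz g, map_mul]

theorem surjective_of_iterate_eq_id {α : Type*} {f : α → α} {n : ℕ} [NeZero n]
    (hf : f^[n] = id) : Surjective f := fun a ↦
  ⟨f^[n - 1] a, by
    rw [← iterate_succ_apply' f, Nat.succ_eq_add_one, Nat.sub_one_add_one (NeZero.ne n), hf, id]⟩

theorem commutatorElement_sq_eq_one (hcent : commutator K ≤ center K)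
    {a : K} (ha : a ^ 2 ∈ commutator K) (b : K) : ⁅a, b⁆ ^ 2 = 1 := by
  rw [← pow_commutatorElement hcent, commutatorElement_eq_one_iff_mul_comm]
  exact (mem_center_iff.1 (hcent ha) b).symm

theorem sq_eq_commutatorElement_map {φ : K →* K} (hφ : Injective φ)
    (hcent : commutator K ≤ center K) (hsq : ∀ g : K, g ^ 2 ∈ commutator K) {x : K}
    (hgen : closure {x, φ x} ⊔ center K = ⊤) (hnorm : x * φ x * φ (φ x) ∈ commutator K) :
    x ^ 2 = ⁅x, φ x⁆ ∧ φ x ^ 2 = ⁅x, φ x⁆ := by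
  have ht := commutatorElement_sq_eq_one hcent (hsq x) (φ x)
  have hmem : ∀ k ∈ commutator K, k = 1 ∨ k = ⁅x, φ x⁆ := fun k hk ↦
    eq_one_or_eq_of_mem_zpowers ht (commutator_eq_zpowers hcent hgen ▸ hk)
  have hksq : ∀ k ∈ commutator K, k ^ 2 = 1 := fun k hk ↦ by
    obtain rfl | rfl := hmem k hk
    exacts [one_pow 2, ht]
  have hfix : ∀ k ∈ commutator K, φ k = k := fun k hk ↦ by
    have hφk : φ k ∈ commutator K := commutator_le_comap_commutator φ hk
    obtain rfl | rfl := hmem k hk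
    · exact map_one φ
    · refine (hmem _ hφk).elim (fun h ↦ ?_) id
      rw [(map_eq_one_iff φ hφ).1 h, map_one]
  have hy : φ x ^ 2 = x ^ 2 := by rw [← map_pow, hfix _ (hsq x)]
  have hxy : (x * φ x) ^ 2 = x ^ 2 :=
    calc (x * φ x) ^ 2 = (x * φ x * φ (φ x) * (φ (φ x))⁻¹) ^ 2 := by rw [mul_inv_cancel_right]
      _ = (x * φ x * φ (φ x)) ^ 2 * ((φ (φ x))⁻¹) ^ 2 :=
        Commute.mul_pow (mem_center_iff.1 (hcent hnorm) _).symm 2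
      _ = (φ (φ (x ^ 2)))⁻¹ := by rw [hksq _ hnorm, one_mul, inv_pow, map_pow, map_pow]
      _ = (x ^ 2)⁻¹ := by rw [hfix _ (hsq x), hfix _ (hsq x)]
      _ = x ^ 2 := inv_eq_of_mul_eq_one_left (by rw [← pow_two, hksq _ (hsq x)])
  have hx := sq_eq_commutatorElement hy hxy
  exact ⟨hx, hy.trans hx⟩

variable [Finite K] {φ : K →* K} {p : ℕ} [Fact p.Prime]

theorem eq_top_of_map_abelianization_eq_top [Group.IsNilpotent K] {S : Subgroup K}
    (hS : S.map Abelianization.of = ⊤) : S = ⊤ := by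
  apply eq_top_of_sup_commutator_eq_top
  rw [← Abelianization.ker_of K, ← comap_map_eq, hS, comap_top]

theorem map_center_eq_fixedSubgroup (hK : IsPGroup 2 K) (hcent : commutator K ≤ center K)
    (hnonab : commutator K ≠ ⊥) (hab : Nat.card (Abelianization K) ≤ 8)
    (hindex : (center K).index ≤ 4) (hp : p ≠ 2) (hφ : φ^[p] = id)
    (hne : φ ≠ MonoidHom.id K) :
    (center K).map Abelianization.of = fixedSubgroup (Abelianization.map φ) := by
  have := hK.isNilpotent
  have hof : Surjective (Abelianization.of (G := K)) := QuotientGroup.mk'_surjective _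
  have hcomp : (Abelianization.map φ).comp Abelianization.of = Abelianization.of.comp φ := rfl
  have hinv : (center K).map Abelianization.of ≤
      ((center K).map Abelianization.of).comap (Abelianization.map φ) := by
    rw [← map_le_iff_le_comap, Subgroup.map_map, hcomp, ← Subgroup.map_map]
    exact map_mono (map_le_iff_le_comap.2
      (center_le_comap_center (surjective_of_iterate_eq_id hφ)))
  have hmap : ((center K).map Abelianization.of).index = (center K).index :=
    index_map_eq _ hof ((Abelianization.ker_of K).le.trans hcent)
  have htwo : 2 < (center K).index := by
    by_contra! h
    exact hnonab (commutator_eq_bot_of_index_center_dvd_prime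
      (dvd_two_of_pos_of_le_two (Nat.pos_of_ne_zero index_ne_zero_of_finite) h))
  exact eq_fixedSubgroup_of_index_le_four (hK.of_surjective _ hof) hab hp
    (iterate_eq_id_of_comp_eq hof hcomp hφ)
    (ne_id_of_comp_eq (not_dvd_card_of_isPGroup hK Fact.out hp) hφ hne
      (Abelianization.ker_of K).le hcomp)
    hinv (hmap ▸ htwo) (hmap ▸ hindex)

theorem exists_isQuaternionicTriple (hK : IsPGroup 2 K) (hcent : commutator K ≤ center K)
    (hnonab : commutator K ≠ ⊥) (hab : Nat.card (Abelianization K) ≤ 8)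
    (hindex : (center K).index ≤ 4) (hp : p ≠ 2) (hφ : φ^[p] = id)
    (hne : φ ≠ MonoidHom.id K) : ∃ x y z : K, IsQuaternionicTriple x y z := by
  have := hK.isNilpotent
  have hof : Surjective (Abelianization.of (G := K)) := QuotientGroup.mk'_surjective _
  have hker := Abelianization.ker_of K
  have hA := hK.of_surjective _ hof
  have hcomp : (Abelianization.map φ).comp Abelianization.of = Abelianization.of.comp φ := rfl
  have hψ := iterate_eq_id_of_comp_eq hof hcomp hφ
  have hψne := ne_id_of_comp_eq (not_dvd_card_of_isPGroup hK Fact.out hp) hφ hne hker.le hcomp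
  have hsq := sq_mem_commutator hK hab hp hφ hne
  have hfix := map_center_eq_fixedSubgroup hK hcent hnonab hab hindex hp hφ hne
  have hfixindex : (fixedSubgroup (Abelianization.map φ)).index ≤ 4 := by
    rwa [← hfix, index_map_eq _ hof (hker.le.trans hcent)]
  have hfixcard := four_mul_card_fixedSubgroup_le hA hp hψ hψne
  obtain rfl := eq_three_of_index_fixedSubgroup_le_four hA hab hp hψ hψne hfixindex
  obtain ⟨u, hu, hgen⟩ := exists_closure_sup_fixedSubgroup_eq_top hA hab hψ hψne
  obtain ⟨x, rfl⟩ := hof u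
  have hgenK : closure {x, φ x} ⊔ center K = ⊤ := by
    refine eq_top_of_map_abelianization_eq_top ?_
    rwa [Subgroup.map_sup, hfix, MonoidHom.map_closure, Set.image_pair]
  obtain ⟨hx, hy⟩ := sq_eq_commutatorElement_map
    (Finite.injective_iff_surjective.2 (surjective_of_iterate_eq_id hφ)) hcent
    hsq hgenK (hker ▸ hu)
  have hcyclic : IsCyclic (fixedSubgroup (Abelianization.map φ)) :=
    isCyclic_of_card_dvd_prime (dvd_two_of_pos_of_le_two Nat.card_pos (by omega))
  obtain ⟨ζ, hζ⟩ := (Subgroup.isCyclic_iff_exists_zpowers_eq_top _).1 hcyclic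
  obtain ⟨z, rfl⟩ := hof ζ
  have hz : z ∈ center K := by
    rw [← comap_map_eq_self (hker.le.trans hcent), hfix, ← hζ]
    exact mem_zpowers _
  refine ⟨x, φ x, z, eq_top_of_map_abelianization_eq_top ?_, hz, hx, hy,
    eq_one_or_eq_of_mem_zpowers (commutatorElement_sq_eq_one hcent (hsq x) (φ x))
      (commutator_eq_zpowers hcent hgenK ▸ hsq z)⟩
  rw [← hgen, ← hζ, zpowers_eq_closure, ← Subgroup.closure_union, MonoidHom.map_closure]
  simp only [Set.image_insert_eq, Set.image_singleton, Set.insert_union, Set.singleton_union]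
  rfl

end QuaternionicTriple

section LowerCentralSeries

variable {G : Type*} [Group G]

theorem commutator_quotient (N : Subgroup G) [N.Normal] :
    commutator (G ⧸ N) = (commutator G).map (QuotientGroup.mk' N) := by
  rw [map_commutator_eq, (MonoidHom.range_eq_top).2 (QuotientGroup.mk'_surjective N),
    commutator_def]

theorem map_mk'_le_center_iff {L N : Subgroup G} [N.Normal] :
    L.map (QuotientGroup.mk' N) ≤ center (G ⧸ N) ↔ ⁅L, ⊤⁆ ≤ N := by
  rw [map_le_iff_le_comap, commutator_le]
  refine forall₂_congr fun a _ ↦ ?_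
  simp only [mem_comap, mem_center_iff, (QuotientGroup.mk'_surjective N).forall,
    commutatorElement_mem_iff_commute, mem_top, forall_const, commute_iff_eq, eq_comm]

theorem commutator_quotient_le_center_iff {N : Subgroup G} [N.Normal] :
    commutator (G ⧸ N) ≤ center (G ⧸ N) ↔ (⊤ : Subgroup G).lowerCentralSeries 2 ≤ N := by
  rw [commutator_quotient, map_mk'_le_center_iff, Subgroup.lowerCentralSeries_succ,
    top_lowerCentralSeries_one]

theorem index_commutator_quotient {N : Subgroup G} [N.Normal] (hN : N ≤ commutator G) :
    (commutator (G ⧸ N)).index = (commutator G).index := by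
  rw [commutator_quotient, index_map_eq _ (QuotientGroup.mk'_surjective N)]
  rwa [QuotientGroup.ker_mk']

theorem lowerCentralSeries_le_comap (φ : G →* G) (i : ℕ) :
    (⊤ : Subgroup G).lowerCentralSeries i ≤ ((⊤ : Subgroup G).lowerCentralSeries i).comap φ := by
  rw [← map_le_iff_le_comap, map_lowerCentralSeries]
  exact Subgroup.lowerCentralSeries_mono i le_top

theorem two_mul_card_le_of_lt [Finite G] {H L : Subgroup G} (hlt : H < L) :
    2 * Nat.card H ≤ Nat.card L := by
  refine Nat.le_of_mul_le_mul_right ?_ (Nat.pos_of_ne_zero (index_ne_zero_of_finite (H := L)))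
  calc 2 * Nat.card H * L.index = Nat.card H * (2 * L.index) := by ring
    _ ≤ Nat.card H * H.index := Nat.mul_le_mul_left _ (two_mul_index_le_of_lt hlt)
    _ = Nat.card L * L.index := by rw [card_mul_index, card_mul_index]

section Nilpotent

variable [Group.IsNilpotent G]

theorem nilpotencyClass_le_of_lowerCentralSeries_le_succ {i : ℕ}
    (h : (⊤ : Subgroup G).lowerCentralSeries i ≤ (⊤ : Subgroup G).lowerCentralSeries (i + 1)) :
    Group.nilpotencyClass G ≤ i := by
  have hle : ∀ k, (⊤ : Subgroup G).lowerCentralSeries i ≤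
      (⊤ : Subgroup G).lowerCentralSeries (i + k) := by
    intro k
    induction k with
    | zero => exact le_rfl
    | succ k ih =>
      refine h.trans ?_
      rw [← add_assoc, Subgroup.lowerCentralSeries_succ, Subgroup.lowerCentralSeries_succ]
      exact commutator_mono ih le_rfl
  obtain ⟨k, hk⟩ := Subgroup.nilpotent_iff_lowerCentralSeries.1 ‹Group.IsNilpotent G›
  rw [← Subgroup.lowerCentralSeries_eq_bot_iff_nilpotencyClass_le, eq_bot_iff, ← hk]
  exact (hle k).trans (Subgroup.lowerCentralSeries_antitone _ (Nat.le_add_left k i))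

theorem two_pow_le_card_lowerCentralSeries [Finite G] {i j : ℕ}
    (h : i + j ≤ Group.nilpotencyClass G) :
    2 ^ j ≤ Nat.card ((⊤ : Subgroup G).lowerCentralSeries i) := by
  induction j generalizing i with
  | zero => exact Nat.card_pos
  | succ j ih =>
    have hlt : (⊤ : Subgroup G).lowerCentralSeries (i + 1) <
        (⊤ : Subgroup G).lowerCentralSeries i := by
      refine lt_of_le_not_ge (Subgroup.lowerCentralSeries_antitone _ (Nat.le_succ i)) fun hle ↦ ?_
      have := nilpotencyClass_le_of_lowerCentralSeries_le_succ hle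
      omega
    have hpow := ih (i := i + 1) (by omega)
    have := two_mul_card_le_of_lt hlt
    omega

end Nilpotent

/-- The commutator `t = ⁅x, y⁆` of lifts of `f x, f y` commutes with `x` and `y`, since
`x ^ 2 * t⁻¹` and `y ^ 2 * t⁻¹` are central, and with any lift of `f z`. -/
theorem IsQuaternionicTriple.commutator_le_center {H K : Type*} [Group H] [Group K] {f : H →* K}
    (hf : Surjective f) (hker : f.ker ≤ center H) {u v w : K}
    (h : IsQuaternionicTriple u v w) : commutator H ≤ center H := by
  obtain ⟨x, rfl⟩ := hf u
  obtain ⟨y, rfl⟩ := hf v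
  obtain ⟨z, rfl⟩ := hf w
  have hgen : closure ({x, y} ∪ ({z} ∪ (center H : Set H))) = ⊤ := by
    rw [← Set.union_assoc, Subgroup.closure_union, closure_eq, ← sup_eq_right.2 hker, ← sup_assoc,
      ← comap_map_eq, MonoidHom.map_closure, Set.image_union, Set.image_pair, Set.image_singleton,
      Set.insert_union, Set.singleton_union, h.closure_eq_top, comap_top, top_sup_eq]
  have hz : ∀ g, ⁅z, g⁆ ∈ center H := fun g ↦ hker <| by
    rw [MonoidHom.mem_ker, map_commutatorElement, commutatorElement_eq_one_iff_mul_comm]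
    exact (mem_center_iff.1 h.mem_center _).symm
  have hsq : ∀ g, f g ^ 2 = ⁅f x, f y⁆ → Commute g ⁅x, y⁆ := fun g hg ↦ by
    have hmem : (g ^ 2)⁻¹ * ⁅x, y⁆ ∈ center H := hker <| by
      rw [MonoidHom.mem_ker, map_mul, map_inv, map_pow, hg, map_commutatorElement, inv_mul_cancel]
    have hcomm : Commute g ((g ^ 2)⁻¹ * ⁅x, y⁆) := mem_center_iff.1 hmem g
    simpa only [mul_inv_cancel_left] using ((Commute.refl g).pow_right 2).mul_right hcomm
  have ht : ⁅x, y⁆ ∈ center H := by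
    refine mem_center_of_closure_eq_top hgen ?_
    rintro g ((rfl | rfl) | rfl | hg)
    exacts [hsq _ h.sq_left, hsq _ h.sq_right, commute_commutatorElement hz x y,
      (mem_center_iff.1 hg _).symm]
  refine commutator_le_of_closure_pair_union_eq_top hgen ht ?_
  rintro g (rfl | hg) k
  · exact hz k
  · rw [commutatorElement_eq_one_iff_mul_comm.2 (mem_center_iff.1 hg k).symm]
    exact one_mem _

theorem IsQuaternionicTriple.nilpotencyClass_le_two [Group.IsNilpotent G]
    {u v w : G ⧸ (⊤ : Subgroup G).lowerCentralSeries 2} (h : IsQuaternionicTriple u v w) :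
    Group.nilpotencyClass G ≤ 2 := by
  let f := QuotientGroup.map ((⊤ : Subgroup G).lowerCentralSeries 3)
    ((⊤ : Subgroup G).lowerCentralSeries 2) (MonoidHom.id G)
    (Subgroup.lowerCentralSeries_antitone _ (Nat.le_succ 2))
  have hker : f.ker ≤ center _ := by
    have hmap := map_mk'_le_center_iff.2 (Subgroup.lowerCentralSeries_succ (⊤ : Subgroup G) 2).ge
    exact (QuotientGroup.ker_map _ _ _ _).trans_le hmap
  have hf : Surjective f := QuotientGroup.map_surjective_of_surjective _ _ _
    (QuotientGroup.mk_surjective.comp surjective_id) _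
  exact nilpotencyClass_le_of_lowerCentralSeries_le_succ
    (commutator_quotient_le_center_iff.1 (h.commutator_le_center hf hker))

section CoclassTwo

theorem index_le_two_pow_of_two_pow_le_card {H : Subgroup G} {k m : ℕ}
    (hG : Nat.card G = 2 ^ (k + m)) (hH : 2 ^ k ≤ Nat.card H) : H.index ≤ 2 ^ m := by
  refine Nat.le_of_mul_le_mul_left ?_ (Nat.two_pow_pos k)
  calc 2 ^ k * H.index ≤ Nat.card H * H.index := Nat.mul_le_mul_right _ hH
    _ = 2 ^ k * 2 ^ m := by rw [card_mul_index, hG, pow_add]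

variable [Finite G]

theorem index_center_le_four_of_card_le_sixteen (hG : IsPGroup 2 G)
    (hcent : commutator G ≤ center G) (hcard : Nat.card G ≤ 16)
    (hindex : (commutator G).index ≤ 8) : (center G).index ≤ 4 := by
  by_cases hle : Nat.card (commutator G) ≤ 2
  · exact index_center_le_four hcent hle hindex
  · obtain ⟨k, hk⟩ := (hG.to_subgroup (commutator G)).exists_card_eq
    have hfour : 2 ^ 2 ≤ Nat.card (commutator G) := by
      rw [hk] at hle ⊢
      refine Nat.pow_le_pow_right two_pos (not_lt.1 fun hlt ↦ hle ?_)
      exact Nat.pow_le_pow_right two_pos (Nat.le_of_lt_succ hlt)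
    have hmul := card_mul_index (commutator G)
    calc (center G).index ≤ (commutator G).index := index_antitone hcent
      _ ≤ 4 := by nlinarith

variable [Group.IsNilpotent G]

theorem index_lowerCentralSeries_le_of_coclass_two
    (hcard : Nat.card G = 2 ^ (Group.nilpotencyClass G + 2)) {i : ℕ}
    (hi : i ≤ Group.nilpotencyClass G) :
    ((⊤ : Subgroup G).lowerCentralSeries i).index ≤ 2 ^ (i + 2) := by
  obtain ⟨k, hk⟩ := Nat.exists_eq_add_of_le' hi
  exact index_le_two_pow_of_two_pow_le_card (k := k) (by rw [hcard, hk, add_assoc])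
    (two_pow_le_card_lowerCentralSeries (by omega))

variable {φ : G →* G} {p : ℕ} [Fact p.Prime]

theorem exists_isQuaternionicTriple_quotient
    (hcard : Nat.card G = 2 ^ (Group.nilpotencyClass G + 2)) (hclass : 2 ≤ Group.nilpotencyClass G)
    (hp : p ≠ 2) (hφ : φ^[p] = id) (hne : φ ≠ MonoidHom.id G) :
    ∃ x y z : G ⧸ (⊤ : Subgroup G).lowerCentralSeries 2, IsQuaternionicTriple x y z := by
  set N := (⊤ : Subgroup G).lowerCentralSeries 2
  have hG : IsPGroup 2 G := .of_card hcard
  have hK : IsPGroup 2 (G ⧸ N) := hG.to_quotient N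
  have hNle : N ≤ commutator G :=
    top_lowerCentralSeries_one (G := G) ▸ Subgroup.lowerCentralSeries_antitone _ one_le_two
  have hcent : commutator (G ⧸ N) ≤ center (G ⧸ N) := commutator_quotient_le_center_iff.2 le_rfl
  have hindex : (commutator (G ⧸ N)).index ≤ 8 := by
    rw [index_commutator_quotient hNle, ← top_lowerCentralSeries_one]
    exact index_lowerCentralSeries_le_of_coclass_two hcard (one_le_two.trans hclass)
  have hnonab : commutator (G ⧸ N) ≠ ⊥ := fun h ↦ by
    rw [commutator_quotient, Subgroup.map_eq_bot_iff, QuotientGroup.ker_mk',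
      ← top_lowerCentralSeries_one] at h
    have := nilpotencyClass_le_of_lowerCentralSeries_le_succ h
    omega
  have hcomp : (QuotientGroup.map N N φ (lowerCentralSeries_le_comap φ 2)).comp
      (QuotientGroup.mk' N) = (QuotientGroup.mk' N).comp φ := rfl
  refine exists_isQuaternionicTriple hK hcent hnonab hindex
    (index_center_le_four_of_card_le_sixteen hK hcent
      (index_lowerCentralSeries_le_of_coclass_two hcard hclass) hindex) hp
    (iterate_eq_id_of_comp_eq (QuotientGroup.mk'_surjective N) hcomp hφ)
    (ne_id_of_comp_eq (not_dvd_card_of_isPGroup hG Fact.out hp) hφ hne ?_ hcomp)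
  rwa [QuotientGroup.ker_mk']

theorem exists_isQuaternionicTriple_of_coclass_two
    (hcard : Nat.card G = 2 ^ (Group.nilpotencyClass G + 2)) (hclass : 2 ≤ Group.nilpotencyClass G)
    (hp : p ≠ 2) (hφ : φ^[p] = id) (hne : φ ≠ MonoidHom.id G) :
    Nat.card G = 16 ∧ ∃ x y z : G, IsQuaternionicTriple x y z := by
  obtain ⟨x, y, z, h⟩ := exists_isQuaternionicTriple_quotient hcard hclass hp hφ hne
  have hle := h.nilpotencyClass_le_two
  have hbot := Subgroup.lowerCentralSeries_eq_bot_iff_nilpotencyClass_le.2 hle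
  refine ⟨by rw [hcard, le_antisymm hle hclass]; rfl, ?_⟩
  let e := (QuotientGroup.quotientMulEquivOfEq hbot).trans QuotientGroup.quotientBot
  exact ⟨e x, e y, e z, h.map (f := e.toMonoidHom) e.surjective⟩

end CoclassTwo

end LowerCentralSeries

section CyclicExtension

variable {G : Type*} [Group G]

theorem card_sup_zpowers_dvd {N : Subgroup G} [N.Normal] {g : G} {k : ℕ} (hg : g ^ k ∈ N) :
    Nat.card ↥(N ⊔ zpowers g) ∣ Nat.card N * k := by
  have hk : N.relIndex (N ⊔ zpowers g) ∣ k := by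
    nth_rw 1 [relIndex_sup_left, ← QuotientGroup.ker_mk' N]
    rw [relIndex_ker, MonoidHom.map_zpowers, Nat.card_zpowers]
    refine orderOf_dvd_of_pow_eq_one ?_
    rwa [← map_pow, ← MonoidHom.mem_ker, QuotientGroup.ker_mk']
  rw [← relIndex_bot_left, ← relIndex_mul_relIndex _ _ _ bot_le le_sup_left, relIndex_bot_left]
  exact mul_dvd_mul_left _ hk

end CyclicExtension

namespace IsQuaternionicTriple

variable {G : Type*} [Group G] {x y z : G}

theorem commutatorElement_mem_center (h : IsQuaternionicTriple x y z) : ⁅x, y⁆ ∈ center G := by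
  refine mem_center_of_closure_eq_top h.closure_eq_top ?_
  rintro g (rfl | rfl | rfl)
  · exact h.sq_left ▸ (Commute.refl g).pow_right 2
  · exact h.sq_right ▸ (Commute.refl g).pow_right 2
  · exact (mem_center_iff.1 h.mem_center _).symm

theorem commutator_le (h : IsQuaternionicTriple x y z) {N : Subgroup G} [N.Normal]
    (hN : ⁅x, y⁆ ∈ N) : commutator G ≤ N := by
  have hgen : closure ({x, y} ∪ {z}) = ⊤ := h.closure_eq_top ▸ by
    rw [Set.insert_union, Set.singleton_union]
  refine commutator_le_of_closure_pair_union_eq_top hgen hN ?_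
  rintro _ rfl g
  rw [commutatorElement_eq_one_iff_mul_comm.2 (mem_center_iff.1 h.mem_center g).symm]
  exact one_mem N

theorem pow_four (h : IsQuaternionicTriple x y z) : x ^ 4 = 1 := by
  have hsq : x ^ 2 ∈ commutator G :=
    h.sq_left ▸ commutator_mem_commutator (mem_top x) (mem_top y)
  rw [show 4 = 2 * 2 from rfl, pow_mul, h.sq_left]
  exact commutatorElement_sq_eq_one (h.commutator_le h.commutatorElement_mem_center) hsq y

theorem mul_eq_mul_inv (h : IsQuaternionicTriple x y z) : x * y = y * x⁻¹ := by
  have hcomm : Commute ⁅x, y⁆ (y * x) :=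
    (mem_center_iff.1 h.commutatorElement_mem_center (y * x)).symm
  calc x * y = ⁅x, y⁆ * (y * x) := by rw [commutatorElement_def]; group
    _ = y * x * x ^ 2 := by rw [hcomm.eq, h.sq_left]
    _ = y * x⁻¹ * x ^ 4 := by group
    _ = y * x⁻¹ := by rw [h.pow_four, mul_one]

theorem right_mul_mul_right (h : IsQuaternionicTriple x y z) : y * (x * y) = x :=
  calc y * (x * y) = y ^ 2 * x⁻¹ := by rw [h.mul_eq_mul_inv, ← mul_assoc, pow_two]
    _ = x := by rw [h.sq_right, ← h.sq_left]; group

theorem commutatorElement_right (h : IsQuaternionicTriple x y z) : ⁅y, x * y⁆ = ⁅x, y⁆ :=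
  calc ⁅y, x * y⁆ = y * (x * y) * (y ^ 2)⁻¹ * x⁻¹ := by rw [commutatorElement_def]; group
    _ = x * (x ^ 2)⁻¹ * x⁻¹ := by rw [h.right_mul_mul_right, h.sq_right, h.sq_left]
    _ = x ^ 2 * (x ^ 4)⁻¹ := by group
    _ = ⁅x, y⁆ := by rw [h.pow_four, inv_one, mul_one, h.sq_left]

theorem rotate (h : IsQuaternionicTriple x y z) : IsQuaternionicTriple y (x * y) z where
  closure_eq_top := by
    rw [eq_top_iff, ← h.closure_eq_top, closure_le]
    have hy : y ∈ closure {y, x * y, z} := subset_closure (Or.inl rfl)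
    have hxy : x * y ∈ closure {y, x * y, z} := subset_closure (Or.inr (Or.inl rfl))
    have hz : z ∈ closure {y, x * y, z} := subset_closure (Or.inr (Or.inr rfl))
    have hx : x ∈ closure {y, x * y, z} := by
      simpa only [mul_inv_cancel_right] using mul_mem hxy (inv_mem hy)
    rintro g (rfl | rfl | rfl)
    exacts [hx, hy, hz]
  mem_center := h.mem_center
  sq_left := by rw [h.commutatorElement_right, h.sq_right]
  sq_right := by
    rw [h.commutatorElement_right, pow_two, mul_assoc, h.right_mul_mul_right, ← pow_two, h.sq_left]
  sq_center := by rw [h.commutatorElement_right]; exact h.sq_center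

theorem card_dvd_sixteen (h : IsQuaternionicTriple x y z) : Nat.card G ∣ 16 := by
  let T := zpowers ⁅x, y⁆
  have hTcard : Nat.card T ∣ 2 := by
    rw [Nat.card_zpowers]
    refine orderOf_dvd_of_pow_eq_one ?_
    rw [← h.sq_left, ← pow_mul, h.pow_four]
  have hT : T.Normal := normal_of_le_center (zpowers_le.2 h.commutatorElement_mem_center)
  have hnormal : ∀ L, T ≤ L → L.Normal := fun L hL ↦
    Normal.of_commutator_le G ((h.commutator_le (mem_zpowers _)).trans hL)
  have hmem : ⁅x, y⁆ ∈ T := mem_zpowers _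
  have hx : x ^ 2 ∈ T := h.sq_left ▸ hmem
  have hy : y ^ 2 ∈ T ⊔ zpowers x := mem_sup_left (h.sq_right ▸ hmem)
  have hz : z ^ 2 ∈ T ⊔ zpowers x ⊔ zpowers y := mem_sup_left <| mem_sup_left <| by
    obtain h1 | ht := h.sq_center
    exacts [h1 ▸ one_mem T, ht ▸ hmem]
  have htop : T ⊔ zpowers x ⊔ zpowers y ⊔ zpowers z = ⊤ := by
    rw [eq_top_iff, ← h.closure_eq_top, closure_le]
    rintro g (rfl | rfl | rfl)
    exacts [mem_sup_left (mem_sup_left (mem_sup_right (mem_zpowers _))),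
      mem_sup_left (mem_sup_right (mem_zpowers _)), mem_sup_right (mem_zpowers _)]
  have := hnormal (T ⊔ zpowers x) le_sup_left
  have := hnormal (T ⊔ zpowers x ⊔ zpowers y) (le_sup_left.trans le_sup_left)
  calc Nat.card G = Nat.card ↥(T ⊔ zpowers x ⊔ zpowers y ⊔ zpowers z) := by rw [htop, card_top]
    _ ∣ Nat.card T * 2 * 2 * 2 := (card_sup_zpowers_dvd hz).trans <| mul_dvd_mul_right
      ((card_sup_zpowers_dvd hy).trans <| mul_dvd_mul_right (card_sup_zpowers_dvd hx) 2) 2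
    _ ∣ 2 * 2 * 2 * 2 := by gcongr

theorem nonempty_mulEquiv {T : Type*} [Group T] {X Y Z : T} (h : IsQuaternionicTriple x y z)
    (hcard : Nat.card G = 16) (hT : IsQuaternionicTriple X Y Z) {f : T →* G} (hx : f X = x)
    (hy : f Y = y) (hz : f Z = z) : Nonempty (G ≃* T) := by
  have hf : Surjective f := by
    rw [← MonoidHom.range_eq_top, eq_top_iff, ← h.closure_eq_top, closure_le]
    rintro g (rfl | rfl | rfl)
    exacts [⟨X, hx⟩, ⟨Y, hy⟩, ⟨Z, hz⟩]
  have hdvd := hT.card_dvd_sixteen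
  have : Finite T := Nat.finite_of_card_ne_zero (ne_zero_of_dvd_ne_zero (by norm_num) hdvd)
  have hbij := hf.bijective_of_nat_card_le (hcard ▸ Nat.le_of_dvd (by norm_num) hdvd)
  exact ⟨(MulEquiv.ofBijective f hbij).symm⟩

theorem iterate_three_eq_id (h : IsQuaternionicTriple x y z) {f : G →* G} (hx : f x = y)
    (hy : f y = x * y) (hz : f z = z) : f^[3] = id := by
  have hfx : f (f (f x)) = x := by rw [hx, hy, map_mul, hx, hy, h.right_mul_mul_right]
  have hfy : f (f (f y)) = y := by rw [← hx, hfx]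
  have hid : f.comp (f.comp f) = MonoidHom.id G := by
    refine MonoidHom.eq_of_eqOn_dense h.closure_eq_top ?_
    rintro g (rfl | rfl | rfl)
    exacts [hfx, hfy, by simp only [MonoidHom.comp_apply, hz, MonoidHom.id_apply]]
  exact funext fun g ↦ DFunLike.congr_fun hid g

end IsQuaternionicTriple

section ZModHom

variable {G : Type*} [Group G]

/-- The homomorphism from the cyclic group `ZMod k`, written multiplicatively, sending the
generator `1` to `x`. -/
def zmodPowHom {k : ℕ} (x : G) (hx : x ^ k = 1) : Multiplicative (ZMod k) →* G :=
  AddMonoidHom.toMultiplicativeLeft (ZMod.lift k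
    ⟨zmultiplesHom (Additive G) (Additive.ofMul x), by
      rw [zmultiplesHom_apply, natCast_zsmul, ← ofMul_pow, hx, ofMul_one]⟩)

theorem zmodPowHom_ofAdd_intCast {k : ℕ} (x : G) (hx : x ^ k = 1) (i : ℤ) :
    zmodPowHom x hx (Multiplicative.ofAdd (i : ZMod k)) = x ^ i := by
  simp [zmodPowHom]

theorem exists_zmodPowHom_eq_zpow {k : ℕ} (x : G) (hx : x ^ k = 1) (m : Multiplicative (ZMod k)) :
    ∃ i : ℤ, zmodPowHom x hx m = x ^ i := by
  obtain ⟨i, hi⟩ := ZMod.intCast_surjective m.toAdd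
  exact ⟨i, by rw [← zmodPowHom_ofAdd_intCast x hx, hi, ofAdd_toAdd]⟩

theorem zmodPowHom_ofAdd_one {k : ℕ} (x : G) (hx : x ^ k = 1) :
    zmodPowHom x hx (Multiplicative.ofAdd 1) = x := by
  simpa only [Int.cast_one, zpow_one] using zmodPowHom_ofAdd_intCast x hx 1

/-- The homomorphism from the generalized quaternion group sending `a 1` to `x` and `xa 0` to
`y`. -/
def quaternionGroupLift {n : ℕ} (x y : G) (hx : x ^ (2 * n) = 1) (hy : y ^ 2 = x ^ n)
    (hxy : x * y = y * x⁻¹) : QuaternionGroup n →* G :=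
  MonoidHom.mk' (fun
    | .a i => zmodPowHom x hx (Multiplicative.ofAdd i)
    | .xa i => y * zmodPowHom x hx (Multiplicative.ofAdd i)) <| by
    have hconj (m : Multiplicative (ZMod (2 * n))) :
        zmodPowHom x hx m * y = y * (zmodPowHom x hx m)⁻¹ := by
      obtain ⟨i, hi⟩ := exists_zmodPowHom_eq_zpow x hx m
      have hsemi : SemiconjBy y x⁻¹ x := hxy.symm
      rw [hi, ← inv_zpow]
      exact (hsemi.zpow_right i).symm
    have hn : zmodPowHom x hx (Multiplicative.ofAdd (n : ZMod (2 * n))) = y * y := by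
      rw [← pow_two, hy]
      simpa only [Int.cast_natCast, zpow_natCast] using zmodPowHom_ofAdd_intCast x hx n
    rintro (i | i) (j | j)
    · simp only [QuaternionGroup.a_mul_a, ofAdd_add, map_mul]
    · simp only [QuaternionGroup.a_mul_xa]
      rw [← mul_assoc, hconj, mul_assoc, sub_eq_neg_add, ofAdd_add, map_mul, ofAdd_neg, map_inv]
    · simp only [QuaternionGroup.xa_mul_a, ofAdd_add, map_mul, mul_assoc]
    · simp only [QuaternionGroup.xa_mul_xa]
      rw [add_sub_assoc, sub_eq_neg_add, ofAdd_add, ofAdd_add, map_mul, map_mul, hn, ofAdd_neg,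
        map_inv, mul_assoc, mul_assoc, ← mul_assoc (zmodPowHom x hx (.ofAdd i)) y, hconj, mul_assoc]

theorem quaternionGroupLift_a {n : ℕ} (x y : G) (hx : x ^ (2 * n) = 1) (hy : y ^ 2 = x ^ n)
    (hxy : x * y = y * x⁻¹) : quaternionGroupLift x y hx hy hxy (.a 1) = x :=
  zmodPowHom_ofAdd_one x hx

theorem quaternionGroupLift_xa {n : ℕ} (x y : G) (hx : x ^ (2 * n) = 1) (hy : y ^ 2 = x ^ n)
    (hxy : x * y = y * x⁻¹) : quaternionGroupLift x y hx hy hxy (.xa 0) = y := by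
  change y * zmodPowHom x hx 1 = y
  rw [map_one, mul_one]

end ZModHom

section Quaternion

theorem isQuaternionicTriple_quaternionGroup :
    IsQuaternionicTriple (G := QuaternionGroup 2 × Multiplicative (ZMod 2))
      (.a 1, 1) (.xa 0, 1) (1, .ofAdd 1) where
  closure_eq_top := by
    have hnormal : ∀ g : QuaternionGroup 2 × Multiplicative (ZMod 2), ∃ i : Fin 4, ∃ j k : Fin 2,
        ((.a 1, 1) ^ i.1 * (.xa 0, 1) ^ j.1 * (1, .ofAdd 1) ^ k.1 :
          QuaternionGroup 2 × Multiplicative (ZMod 2)) = g := by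
      decide
    refine eq_top_iff.2 fun g _ ↦ ?_
    obtain ⟨i, j, k, rfl⟩ := hnormal g
    refine mul_mem (mul_mem (pow_mem ?_ _) (pow_mem ?_ _)) (pow_mem ?_ _)
    exacts [subset_closure (Or.inl rfl), subset_closure (Or.inr (Or.inl rfl)),
      subset_closure (Or.inr (Or.inr rfl))]
  mem_center := mem_center_iff.2 (by decide)
  sq_left := by decide
  sq_right := by decide
  sq_center := by decide

theorem IsQuaternionicTriple.exists_hom_of_sq_eq_one {G : Type*} [Group G] {x y z : G}
    (h : IsQuaternionicTriple x y z) (hz : z ^ 2 = 1) :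
    ∃ f : QuaternionGroup 2 × Multiplicative (ZMod 2) →* G,
      f (.a 1, 1) = x ∧ f (.xa 0, 1) = y ∧ f (1, .ofAdd 1) = z := by
  let q : QuaternionGroup 2 →* G := quaternionGroupLift x y h.pow_four
    (h.sq_right.trans h.sq_left.symm) h.mul_eq_mul_inv
  have hcomm (g : QuaternionGroup 2) (m : Multiplicative (ZMod 2)) :
      Commute (q g) (zmodPowHom z hz m) := by
    obtain ⟨i, hi⟩ := exists_zmodPowHom_eq_zpow z hz m
    rw [hi]
    exact Commute.zpow_right (mem_center_iff.1 h.mem_center (q g)) i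
  refine ⟨q.noncommCoprod (zmodPowHom z hz) hcomm, ?_, ?_, ?_⟩ <;>
    rw [MonoidHom.noncommCoprod_apply]
  · rw [map_one, mul_one, quaternionGroupLift_a]
  · rw [map_one, mul_one, quaternionGroupLift_xa]
  · rw [map_one, one_mul, zmodPowHom_ofAdd_one]

end Quaternion

section PresentedGroup

theorem commutatorElement_mul_mul_of_mem_center {G : Type*} [Group G] {a : G} (ha : a ∈ center G)
    (b c : G) : ⁅a * b, a * c⁆ = ⁅b, c⁆ := by
  have hcomm (g : G) : Commute g a := mem_center_iff.1 ha g
  calc ⁅a * b, a * c⁆ = a * (b * a) * c * b⁻¹ * (a⁻¹ * c⁻¹) * a⁻¹ := by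
        rw [commutatorElement_def]; group
    _ = a * (a * b) * c * b⁻¹ * (c⁻¹ * a⁻¹) * a⁻¹ := by
        rw [(hcomm b).eq, (hcomm c).inv_inv.eq]
    _ = a ^ 2 * (⁅b, c⁆ * (a ^ 2)⁻¹) := by rw [commutatorElement_def, pow_two]; group
    _ = ⁅b, c⁆ := by rw [((hcomm _).pow_right 2).inv_right.eq, mul_inv_cancel_left]

theorem conj_mul_inv_eq_one_iff_commutatorElement_eq {G : Type*} [Group G] {u : G}
    (hu : u ∈ center G) (b c : G) : c⁻¹ * b * c * (u * b)⁻¹ = 1 ↔ ⁅b, c⁆ = u := by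
  rw [mul_inv_eq_one, mul_assoc, inv_mul_eq_iff_eq_mul, ← mul_assoc, mem_center_iff.1 hu c,
    mul_assoc, ← mul_inv_eq_iff_eq_mul, commutatorElement_def, mul_inv_rev, ← mul_assoc]

theorem isQuaternionicTriple_mul_mul {G : Type*} [Group G] {a b c : G}
    (hgen : closure {a, b, c} = ⊤) (ha : a ∈ center G) (hb : b ^ 2 = 1) (hc : c ^ 2 = 1)
    (hbc : ⁅b, c⁆ = a ^ 2) : IsQuaternionicTriple (a * b) (a * c) a := by
  have hxy : ⁅a * b, a * c⁆ = a ^ 2 := by rw [commutatorElement_mul_mul_of_mem_center ha, hbc]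
  have hsq {g : G} (hg : g ^ 2 = 1) : (a * g) ^ 2 = a ^ 2 := by
    rw [(Commute.symm (mem_center_iff.1 ha g)).mul_pow, hg, mul_one]
  refine ⟨?_, ha, (hsq hb).trans hxy.symm, (hsq hc).trans hxy.symm, Or.inr hxy.symm⟩
  rw [eq_top_iff, ← hgen, closure_le]
  have ha' : a ∈ closure {a * b, a * c, a} := subset_closure (Or.inr (Or.inr rfl))
  rintro g (rfl | rfl | rfl)
  · exact ha'
  · exact (mul_mem_cancel_left ha').1 (subset_closure (Or.inl rfl))
  · exact (mul_mem_cancel_left ha').1 (subset_closure (Or.inr (Or.inl rfl)))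

theorem closure_pGroup16_eq_top :
    closure {(.of .a : PGroup16), .of .b, .of .c} = ⊤ := by
  rw [← PresentedGroup.closure_range_of]
  congr 1
  ext g
  constructor
  · rintro (rfl | rfl | rfl) <;> exact Set.mem_range_self _
  · rintro ⟨_ | _ | _, rfl⟩
    exacts [Or.inl rfl, Or.inr (Or.inl rfl), Or.inr (Or.inr rfl)]

theorem pGroup16_of_a_mem_center : (.of .a : PGroup16) ∈ center PGroup16 := by
  have hcomm {a g : PGroup16} (h : a⁻¹ * g * a * g⁻¹ = 1) : Commute g a := by
    rwa [mul_inv_eq_one, mul_assoc, inv_mul_eq_iff_eq_mul] at h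
  refine mem_center_of_closure_eq_top closure_pGroup16_eq_top ?_
  rintro g (rfl | rfl | rfl)
  · exact Commute.refl _
  · exact hcomm (PresentedGroup.one_of_mem (Or.inr (Or.inr (Or.inr (Or.inl rfl)))))
  · exact hcomm (PresentedGroup.one_of_mem (Or.inr (Or.inr (Or.inr (Or.inr (Or.inl rfl))))))

theorem pGroup16_commutatorElement : ⁅(.of .b : PGroup16), (.of .c : PGroup16)⁆ = .of .a ^ 2 :=
  (conj_mul_inv_eq_one_iff_commutatorElement_eq (pow_mem pGroup16_of_a_mem_center 2) _ _).1
    (PresentedGroup.one_of_mem (Or.inr (Or.inr (Or.inr (Or.inr (Or.inr rfl))))))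

theorem isQuaternionicTriple_pGroup16 :
    IsQuaternionicTriple (.of .a * .of .b : PGroup16) (.of .a * .of .c) (.of .a) :=
  isQuaternionicTriple_mul_mul closure_pGroup16_eq_top pGroup16_of_a_mem_center
    (PresentedGroup.one_of_mem (Or.inr (Or.inl rfl)))
    (PresentedGroup.one_of_mem (Or.inr (Or.inr (Or.inl rfl))))
    pGroup16_commutatorElement

theorem IsQuaternionicTriple.exists_hom_of_sq_eq_commutatorElement {G : Type*} [Group G] {x y z : G}
    (h : IsQuaternionicTriple x y z) (hz : z ^ 2 = ⁅x, y⁆) :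
    ∃ f : PGroup16 →* G, f (.of .a * .of .b) = x ∧ f (.of .a * .of .c) = y ∧ f (.of .a) = z := by
  let v : PGen → G
    | .a => z
    | .b => z⁻¹ * x
    | .c => z⁻¹ * y
  have hcenter := inv_mem h.mem_center
  have hsq {g : G} (hg : g ^ 2 = ⁅x, y⁆) : (z⁻¹ * g) ^ 2 = 1 := by
    rw [(Commute.symm (mem_center_iff.1 hcenter g)).mul_pow, hg, ← hz, inv_pow, inv_mul_cancel]
  have hconj (g : G) : z⁻¹ * g * z * g⁻¹ = 1 := by
    rw [mul_assoc z⁻¹, mem_center_iff.1 h.mem_center, inv_mul_cancel_left, mul_inv_cancel]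
  have hz4 : z ^ 4 = 1 := by
    rw [show 4 = 2 * 2 from rfl, pow_mul, hz, ← h.sq_left, ← pow_mul, h.pow_four]
  have hv : ∀ r ∈ PGen.Prels, FreeGroup.lift v r = 1 := by
    have hva : FreeGroup.lift v PGen.fa = z := FreeGroup.lift_apply_of
    have hvb : FreeGroup.lift v PGen.fb = z⁻¹ * x := FreeGroup.lift_apply_of
    have hvc : FreeGroup.lift v PGen.fc = z⁻¹ * y := FreeGroup.lift_apply_of
    rintro r (rfl | rfl | rfl | rfl | rfl | rfl) <;>
      simp only [map_mul, map_inv, map_pow, hva, hvb, hvc]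
    · exact hz4
    · exact hsq h.sq_left
    · exact hsq h.sq_right
    · exact hconj _
    · exact hconj _
    · rw [conj_mul_inv_eq_one_iff_commutatorElement_eq (pow_mem h.mem_center 2),
        commutatorElement_mul_mul_of_mem_center hcenter, hz]
  refine ⟨PresentedGroup.toGroup hv, ?_, ?_, PresentedGroup.toGroup.of hv⟩ <;>
    rw [map_mul, PresentedGroup.toGroup.of, PresentedGroup.toGroup.of] <;>
    exact mul_inv_cancel_left z _

end PresentedGroup

section Automorphisms

theorem prime_dvd_card_mulAut_iff {G : Type*} [Group G] [Finite G] {p : ℕ} [Fact p.Prime] :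
    p ∣ Nat.card (MulAut G) ↔ ∃ φ : G →* G, φ^[p] = id ∧ φ ≠ MonoidHom.id G := by
  have hiter (σ : MulAut G) : ⇑(σ ^ p) = σ^[p] :=
    hom_coe_pow (fun τ : MulAut G ↦ (τ : G → G)) rfl (fun _ _ ↦ rfl) σ p
  constructor
  · intro hp
    obtain ⟨σ, hσ⟩ := exists_prime_orderOf_dvd_card' p hp
    refine ⟨σ.toMonoidHom, ?_, fun h ↦ ?_⟩
    · calc σ^[p] = ⇑(σ ^ p) := (hiter σ).symm
        _ = id := by rw [← hσ, pow_orderOf_eq_one]; rfl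
    · have hone : σ = 1 := MulEquiv.ext fun g ↦ DFunLike.congr_fun h g
      exact (Fact.out : p.Prime).ne_one (by rw [← hσ, hone, orderOf_one])
  · rintro ⟨φ, hφ, hne⟩
    have hsurj : Surjective φ := surjective_of_iterate_eq_id hφ
    let σ : MulAut G := MulEquiv.ofBijective φ ⟨Finite.injective_iff_surjective.2 hsurj, hsurj⟩
    have hpow : σ ^ p = 1 := DFunLike.coe_injective ((hiter σ).trans hφ)
    have hσ : σ ≠ 1 := fun h ↦ hne (MonoidHom.ext fun g ↦ DFunLike.congr_fun h g)
    exact orderOf_eq_prime hpow hσ ▸ orderOf_dvd_natCard σ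

theorem not_isPGroup_mulAut_iff {G : Type*} [Group G] [Finite G] {q : ℕ} [hq : Fact q.Prime] :
    ¬ IsPGroup q (MulAut G) ↔
      ∃ p : ℕ, p.Prime ∧ p ≠ q ∧ ∃ φ : G →* G, φ^[p] = id ∧ φ ≠ MonoidHom.id G := by
  rw [isPGroup_iff_primeFactors_card_subset hq.out.ne_zero, hq.out.primeFactors, Finset.not_subset]
  refine exists_congr fun p ↦ ?_
  rw [Nat.mem_primeFactors_of_ne_zero Nat.card_pos.ne', Finset.mem_singleton, and_assoc,
    and_comm (a := _ ∣ _)]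
  refine and_congr_right fun hp ↦ and_congr_right fun _ ↦ ?_
  have : Fact p.Prime := ⟨hp⟩
  exact prime_dvd_card_mulAut_iff

theorem not_isPGroup_mulAut_of_mulEquiv {G H : Type*} [Group G] [Group H] {q : ℕ} (e : G ≃* H)
    (h : ¬ IsPGroup q (MulAut H)) : ¬ IsPGroup q (MulAut G) :=
  fun hG ↦ h (hG.of_equiv (MulAut.congr e))

theorem IsQuaternionicTriple.not_isPGroup_mulAut {G : Type*} [Group G] {x y z : G}
    (h : IsQuaternionicTriple x y z) {f : G →* G} (hx : f x = y) (hy : f y = x * y)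
    (hz : f z = z) (hne : x ≠ y) : ¬ IsPGroup 2 (MulAut G) := by
  have : Finite G :=
    Nat.finite_of_card_ne_zero (ne_zero_of_dvd_ne_zero (by norm_num) h.card_dvd_sixteen)
  refine not_isPGroup_mulAut_iff.2
    ⟨3, Nat.prime_three, by norm_num, f, h.iterate_three_eq_id hx hy hz, ?_⟩
  rintro rfl
  exact hne hx

theorem not_isPGroup_mulAut_quaternionGroup :
    ¬ IsPGroup 2 (MulAut (QuaternionGroup 2 × Multiplicative (ZMod 2))) := by
  have h := isQuaternionicTriple_quaternionGroup
  obtain ⟨f, hx, hy, hz⟩ := h.rotate.exists_hom_of_sq_eq_one (by decide)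
  exact h.not_isPGroup_mulAut hx hy hz (by decide)

theorem pGroup16_of_a_mul_of_b_ne : (.of .a * .of .b : PGroup16) ≠ .of .a * .of .c := by
  have h : IsQuaternionicTriple (G := Multiplicative (ZMod 2)) (.ofAdd 1) 1 1 := by
    refine ⟨(eq_top_iff' _).2 fun g ↦ ?_, mem_center_iff.2 (by decide), by decide, by decide,
      by decide⟩
    obtain rfl | rfl : g = 1 ∨ g = .ofAdd 1 := by revert g; decide
    exacts [one_mem _, Subgroup.subset_closure (Or.inl rfl)]
  obtain ⟨f, hx, hy, -⟩ := h.exists_hom_of_sq_eq_commutatorElement (by decide)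
  intro heq
  rw [heq, hy] at hx
  exact absurd hx (by decide)

theorem not_isPGroup_mulAut_pGroup16 : ¬ IsPGroup 2 (MulAut PGroup16) := by
  have h := isQuaternionicTriple_pGroup16
  have hz : (.of .a : PGroup16) ^ 2 =
      ⁅(.of .a * .of .c : PGroup16), .of .a * .of .b * (.of .a * .of .c)⁆ := by
    rw [h.commutatorElement_right, commutatorElement_mul_mul_of_mem_center pGroup16_of_a_mem_center,
      pGroup16_commutatorElement]
  obtain ⟨f, hx, hy, hz⟩ := h.rotate.exists_hom_of_sq_eq_commutatorElement hz
  exact h.not_isPGroup_mulAut hx hy hz pGroup16_of_a_mul_of_b_ne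

theorem not_isPGroup_mulAut_zmod_two_pow_three :
    ¬ IsPGroup 2 (MulAut (Multiplicative (ZMod 2) × Multiplicative (ZMod 2) ×
      Multiplicative (ZMod 2))) := by
  let f : Multiplicative (ZMod 2) × Multiplicative (ZMod 2) × Multiplicative (ZMod 2) →*
      Multiplicative (ZMod 2) × Multiplicative (ZMod 2) × Multiplicative (ZMod 2) :=
    .mk' (fun g ↦ (g.2.1, g.2.2, g.1)) fun _ _ ↦ rfl
  refine not_isPGroup_mulAut_iff.2 ⟨3, Nat.prime_three, by norm_num, f, rfl, fun hf ↦ ?_⟩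
  have h : f (.ofAdd 1, 1, 1) = (.ofAdd 1, 1, 1) := DFunLike.congr_fun hf _
  exact absurd h (by decide)

end Automorphisms

section ElementaryAbelian

theorem nonempty_linearEquiv_of_card_eq {F V W : Type*} [Field F] [Finite F] [AddCommGroup V]
    [AddCommGroup W] [Module F V] [Module F W] [Finite V] [Finite W]
    (hcard : Nat.card V = Nat.card W) : Nonempty (V ≃ₗ[F] W) := by
  refine FiniteDimensional.nonempty_linearEquiv_of_finrank_eq
    (Nat.pow_right_injective (Finite.one_lt_card (α := F)) ?_)
  calc Nat.card F ^ Module.finrank F V = Nat.card V := Module.natCard_eq_pow_finrank.symm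
    _ = Nat.card W := hcard
    _ = Nat.card F ^ Module.finrank F W := Module.natCard_eq_pow_finrank

theorem nonempty_mulEquiv_of_pow_eq_one {A B : Type*} [CommGroup A] [CommGroup B] [Finite A]
    [Finite B] {p : ℕ} [Fact p.Prime] (hA : ∀ a : A, a ^ p = 1) (hB : ∀ b : B, b ^ p = 1)
    (hcard : Nat.card A = Nat.card B) : Nonempty (A ≃* B) := by
  let _ : Module (ZMod p) (Additive A) := AddCommGroup.zmodModule fun a ↦ hA a.toMul
  let _ : Module (ZMod p) (Additive B) := AddCommGroup.zmodModule fun b ↦ hB b.toMul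
  obtain ⟨e⟩ := nonempty_linearEquiv_of_card_eq (F := ZMod p) (V := Additive A) (W := Additive B)
    hcard
  exact ⟨MulEquiv.toAdditive.symm e.toAddEquiv⟩

theorem nonempty_mulEquiv_zmod_two_pow_three {G : Type*} [Group G] [Finite G] [Group.IsNilpotent G]
    (hcard : Nat.card G = 8) (hclass : Group.nilpotencyClass G ≤ 1) {φ : G →* G} {p : ℕ}
    [Fact p.Prime] (hp : p ≠ 2) (hφ : φ^[p] = id) (hne : φ ≠ MonoidHom.id G) :
    Nonempty (G ≃*
      Multiplicative (ZMod 2) × Multiplicative (ZMod 2) × Multiplicative (ZMod 2)) := by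
  have hcomm : commutator G = ⊥ := by
    rw [← top_lowerCentralSeries_one, Subgroup.lowerCentralSeries_eq_bot_iff_nilpotencyClass_le]
    exact hclass
  have hG : IsPGroup 2 G := IsPGroup.of_card (n := 3) hcard
  have hab : Nat.card (Abelianization G) ≤ 8 :=
    hcard ▸ Nat.card_le_card_of_surjective _ (QuotientGroup.mk'_surjective (commutator G))
  have hsq (g : G) : g ^ 2 = 1 := by
    rw [← mem_bot, ← hcomm]
    exact sq_mem_commutator hG hab hp hφ hne g
  let _ : CommGroup G :=
    { mul_comm := Commute.of_orderOf_dvd_two fun g ↦ orderOf_dvd_of_pow_eq_one (hsq g) }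
  exact nonempty_mulEquiv_of_pow_eq_one hsq (by decide) (by simp [hcard])

end ElementaryAbelian

/-- A finite `2`-group `G` of order `2 ^ n` (`n ≥ 3`) and coclass `2` (nilpotency class
`n - 2`) has an automorphism group which is not a `2`-group if and only if `G` is isomorphic
to `C₂ × C₂ × C₂`, to `Q₈ × C₂`, or to
`P = ⟨a, b, c ∣ a⁴ = b² = c² = 1, bᵃ = b, cᵃ = c, bᶜ = a²b⟩`. -/
theorem coclass_two_aut_not_pGroup_iff
    {G : Type*} [Group G] [Finite G] [Group.IsNilpotent G] {n : ℕ} (hn : 3 ≤ n)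
    (hcard : Nat.card G = 2 ^ n) (hclass : Group.nilpotencyClass G = n - 2) :
    ¬ IsPGroup 2 (MulAut G) ↔
      (Nonempty (G ≃* (Multiplicative (ZMod 2) × Multiplicative (ZMod 2) ×
          Multiplicative (ZMod 2))) ∨
       Nonempty (G ≃* (QuaternionGroup 2 × Multiplicative (ZMod 2))) ∨
       Nonempty (G ≃* PGroup16)) := by
  constructor
  · intro h
    obtain ⟨p, hp, hp2, φ, hφ, hne⟩ := not_isPGroup_mulAut_iff.1 h
    have : Fact p.Prime := ⟨hp⟩
    obtain rfl | hn4 := hn.eq_or_lt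
    · exact Or.inl (nonempty_mulEquiv_zmod_two_pow_three hcard hclass.le hp2 hφ hne)
    · obtain ⟨h16, x, y, z, hxyz⟩ := exists_isQuaternionicTriple_of_coclass_two
        (by rw [hcard, hclass, Nat.sub_add_cancel (by omega)]) (by omega) hp2 hφ hne
      obtain hz | hz := hxyz.sq_center
      · obtain ⟨f, hx, hy, hz⟩ := hxyz.exists_hom_of_sq_eq_one hz
        exact Or.inr (Or.inl
          (hxyz.nonempty_mulEquiv h16 isQuaternionicTriple_quaternionGroup hx hy hz))
      · obtain ⟨f, hx, hy, hz⟩ := hxyz.exists_hom_of_sq_eq_commutatorElement hz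
        exact Or.inr (Or.inr (hxyz.nonempty_mulEquiv h16 isQuaternionicTriple_pGroup16 hx hy hz))
  · rintro (⟨⟨e⟩⟩ | ⟨⟨e⟩⟩ | ⟨⟨e⟩⟩)
    exacts [not_isPGroup_mulAut_of_mulEquiv e not_isPGroup_mulAut_zmod_two_pow_three,
      not_isPGroup_mulAut_of_mulEquiv e not_isPGroup_mulAut_quaternionGroup,
      not_isPGroup_mulAut_of_mulEquiv e not_isPGroup_mulAut_pGroup16]
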